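/- For every graphon W, every δ > 0, and every integer n ≥ 2, N_□(n,δ;W) ≤ n! · N̂_□(n, δ + ε_n; W), where ε_n = 18/√(log₂ n) + 2·d_□(W̄_n, W); moreover ε_n → 0 as n → ∞. -/

import Mathlib

open MeasureTheory Set Filter

noncomputable section

/-- A graphon: a symmetric measurable function `ℝ → ℝ → ℝ` with values in `[0,1]`
(only its values on `[0,1]²` matter). -/
def IsGraphon (W : ℝ → ℝ → ℝ) : Prop :=
  (∀ x y, W x y = W y x) ∧ Measurable (Function.uncurry W) ∧
    ∀ x y, W x y ∈ Set.Icc (0 : ℝ) 1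

/-- The cut norm `‖U‖_□`, the supremum over measurable `S, T ⊆ [0,1]` of
`|∫_{S×T} U|`. -/
def cutNorm (U : ℝ → ℝ → ℝ) : ℝ :=
  sSup { r : ℝ | ∃ S T : Set ℝ, MeasurableSet S ∧ MeasurableSet T ∧
    S ⊆ Set.Icc 0 1 ∧ T ⊆ Set.Icc 0 1 ∧
    r = |∫ p in S ×ˢ T, U p.1 p.2| }

/-- `d_□(W₁, W₂) = ‖W₁ - W₂‖_□`. -/
def dCut (W₁ W₂ : ℝ → ℝ → ℝ) : ℝ := cutNorm (fun x y => W₁ x y - W₂ x y)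

/-- A Lebesgue-measure-preserving map `[0,1] → [0,1]`. -/
def IsMPSelf (σ : ℝ → ℝ) : Prop :=
  MeasureTheory.MeasurePreserving σ
      (MeasureTheory.volume.restrict (Set.Icc (0:ℝ) 1))
      (MeasureTheory.volume.restrict (Set.Icc (0:ℝ) 1)) ∧
    Set.MapsTo σ (Set.Icc (0:ℝ) 1) (Set.Icc (0:ℝ) 1)

/-- The cut distance `δ_□(W₁, W₂)`. -/
def deltaCut (W₁ W₂ : ℝ → ℝ → ℝ) : ℝ :=
  sInf { r : ℝ | ∃ σ₁ σ₂ : ℝ → ℝ, IsMPSelf σ₁ ∧ IsMPSelf σ₂ ∧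
    r = cutNorm (fun x y => W₁ (σ₁ x) (σ₁ y) - W₂ (σ₂ x) (σ₂ y)) }

/-- The binary entropy function `h` (base-2 logarithm; `logb 2 0 = 0` by convention,
so `h 0 = h 1 = 0`). -/
def binEnt (x : ℝ) : ℝ := -x * Real.logb 2 x - (1 - x) * Real.logb 2 (1 - x)

/-- `h̃ x = h (min x (1/2))`. -/
def htilde (x : ℝ) : ℝ := binEnt (min x (1/2))

/-- The entropy `Ent(W) = ∫₀¹∫₀¹ h(W(x,y)) dx dy` of a graphon. -/
def graphonEnt (W : ℝ → ℝ → ℝ) : ℝ :=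
  ∫ x in Set.Icc (0:ℝ) 1, ∫ y in Set.Icc (0:ℝ) 1, binEnt (W x y)

open Classical in
/-- The graphon `W_G` of a simple graph `G` on `{1, …, n}` (vertices as `Fin n`,
vertex `i : Fin n` representing `i+1`): `W_G x y = 1` iff `⌈nx⌉⌈ny⌉ ∈ E(G)`. -/
def graphonOfGraph {n : ℕ} (G : SimpleGraph (Fin n)) : ℝ → ℝ → ℝ := fun x y =>
  if ∃ i j : Fin n, G.Adj i j ∧ ⌈(n : ℝ) * x⌉ = ((i : ℕ) : ℤ) + 1 ∧
      ⌈(n : ℝ) * y⌉ = ((j : ℕ) : ℤ) + 1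
  then 1 else 0

/-- A labelled graph class: a set of graphs on `{1,…,n}` for each `n`. -/
abbrev GraphClass := ∀ n : ℕ, Set (SimpleGraph (Fin n))

/-- A graph class is closed under relabelling by permutations. -/
def IsGraphClass (Q : GraphClass) : Prop :=
  ∀ (n : ℕ) (π : Equiv.Perm (Fin n)) (G : SimpleGraph (Fin n)),
    G ∈ Q n → G.comap ⇑π ∈ Q n

/-- A hereditary graph class: a graph class closed under taking induced subgraphs
(relabelled by the order-preserving bijection). -/
def IsHereditary (Q : GraphClass) : Prop :=
  IsGraphClass Q ∧
    ∀ (m n : ℕ) (f : Fin m → Fin n), StrictMono f →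
      ∀ G ∈ Q n, G.comap f ∈ Q m

/-- `Q̂`: the set of graphons which are limits (in cut distance) of sequences of graphs in
the class `Q` whose orders tend to infinity. -/
def limitSet (Q : GraphClass) : Set (ℝ → ℝ → ℝ) :=
  { W | IsGraphon W ∧
    ∃ (nk : ℕ → ℕ) (Gk : ∀ k, SimpleGraph (Fin (nk k))),
      (∀ k, Gk k ∈ Q (nk k)) ∧ Filter.Tendsto nk Filter.atTop Filter.atTop ∧
      Filter.Tendsto (fun k => deltaCut (graphonOfGraph (Gk k)) W) Filter.atTop (nhds 0) }

/-- `C(n,2) = n(n-1)/2` as a real number. -/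
def choose2 (n : ℕ) : ℝ := (n : ℝ) * ((n : ℝ) - 1) / 2

open Classical in
/-- The step function `E[W | P]` obtained by averaging `W` over the products of the
parts of the partition `P` of `[0,1]`. -/
def condExpPart {k : ℕ} (P : Fin k → Set ℝ) (W : ℝ → ℝ → ℝ) : ℝ → ℝ → ℝ := fun x y =>
  ∑ i : Fin k, ∑ j : Fin k,
    if x ∈ P i ∧ y ∈ P j then ⨍ p in (P i) ×ˢ (P j), W p.1 p.2 else 0

/-- `W̄_n`: the step function of `W` for the partition of `[0,1]` into `n` consecutive
intervals of length `1/n`. -/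
def barStep (n : ℕ) (W : ℝ → ℝ → ℝ) : ℝ → ℝ → ℝ :=
  condExpPart (fun i : Fin n => Set.Ioc (((i : ℕ) : ℝ)/n) ((((i : ℕ) : ℝ) + 1)/n)) W

/-- `N̂_□(n, δ; W)`: the number of graphs `G` on `{1,…,n}` with `d_□(W_G, W) ≤ δ`. -/
def NhatCut (n : ℕ) (δ : ℝ) (W : ℝ → ℝ → ℝ) : ℕ :=
  Nat.card {G : SimpleGraph (Fin n) // dCut (graphonOfGraph G) W ≤ δ}

/-- `N_□(n, δ; W)`: the number of graphs `G` on `{1,…,n}` with `δ_□(W_G, W) ≤ δ`. -/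
def NCut (n : ℕ) (δ : ℝ) (W : ℝ → ℝ → ℝ) : ℕ :=
  Nat.card {G : SimpleGraph (Fin n) // deltaCut (graphonOfGraph G) W ≤ δ}

open Classical in
/-- The induced density `p(F; W)` of a graph `F` on `{1,…,k}` in a graphon `W`. -/
def inducedDensity {k : ℕ} (F : SimpleGraph (Fin k)) (W : ℝ → ℝ → ℝ) : ℝ :=
  ∫ x : Fin k → ℝ in Set.univ.pi (fun _ : Fin k => Set.Icc (0:ℝ) 1),
    ∏ i : Fin k, ∏ j : Fin k,
      if i < j then (if F.Adj i j then W (x i) (x j) else 1 - W (x i) (x j)) else 1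

open Classical in
/-- The randomness support graphon `1_{rand(W)}` of `W`. -/
def randIndicator (W : ℝ → ℝ → ℝ) : ℝ → ℝ → ℝ := fun x y =>
  if 0 < W x y ∧ W x y < 1 then 1 else 0

/-- A kernel `U` is `K_r`-free if `∏_{i<j} U(x_i, x_j) = 0` for a.e. `x ∈ [0,1]^r`. -/
def KFree (r : ℕ) (U : ℝ → ℝ → ℝ) : Prop :=
  ∀ᵐ x ∂(MeasureTheory.volume.restrict (Set.univ.pi fun _ : Fin r => Set.Icc (0:ℝ) 1)),
    (∏ i : Fin r, ∏ j : Fin r, if i < j then U (x i) (x j) else 1) = 0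

open Classical in
/-- The graphon `W^{(r,s)}`: equal to `1/2` off the diagonal blocks, `1` on the first `s`
diagonal blocks `I_i × I_i`, and `0` on the remaining diagonal blocks. -/
def Wrs (r s : ℕ) : ℝ → ℝ → ℝ := fun x y =>
  if ∃ i j : Fin r, i ≠ j ∧ x ∈ Set.Ioc (((i:ℕ):ℝ)/r) ((((i:ℕ):ℝ)+1)/r) ∧
      y ∈ Set.Ioc (((j:ℕ):ℝ)/r) ((((j:ℕ):ℝ)+1)/r)
  then 1/2
  else if ∃ i : Fin r, (i:ℕ) < s ∧ x ∈ Set.Ioc (((i:ℕ):ℝ)/r) ((((i:ℕ):ℝ)+1)/r) ∧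
      y ∈ Set.Ioc (((i:ℕ):ℝ)/r) ((((i:ℕ):ℝ)+1)/r)
  then 1 else 0

/-- `E_r = ⋃_{i ≠ j} I_i × I_j` where `I_i`, `i = 1, …, r`, are the consecutive
intervals of length `1/r` in `[0,1]`. -/
def Er (r : ℕ) : Set (ℝ × ℝ) :=
  ⋃ (i : Fin r) (j : Fin r) (_ : i ≠ j),
    (Set.Ioc (((i:ℕ):ℝ)/r) ((((i:ℕ):ℝ)+1)/r)) ×ˢ (Set.Ioc (((j:ℕ):ℝ)/r) ((((j:ℕ):ℝ)+1)/r))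

/-- `R_r`: the set of graphons equal to `1/2` on `E_r` and `{0,1}`-valued elsewhere
on `[0,1]²`. -/
def Rset (r : ℕ) : Set (ℝ → ℝ → ℝ) :=
  { W | IsGraphon W ∧ (∀ p ∈ Er r, W p.1 p.2 = 1/2) ∧
      ∀ p ∈ ((Set.Icc (0:ℝ) 1) ×ˢ (Set.Icc (0:ℝ) 1)) \ Er r,
        W p.1 p.2 = 0 ∨ W p.1 p.2 = 1 }

/-- A graphon is random-free if it is `{0,1}`-valued a.e. on `[0,1]²`. -/
def IsRandomFree (W : ℝ → ℝ → ℝ) : Prop :=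
  ∀ᵐ p ∂(MeasureTheory.volume.restrict ((Set.Icc (0:ℝ) 1) ×ˢ (Set.Icc (0:ℝ) 1))),
    W (Prod.fst p) (Prod.snd p) = 0 ∨ W (Prod.fst p) (Prod.snd p) = 1

/-!
A near-optimal pair of measure-preserving maps for `δ_□(W_G, W)` induces a coupling of the vertex
set with itself along which the adjacency matrix of `G` and the matrix of cell averages of `W` are
close in cut norm. By weak (Frieze–Kannan) regularity both matrices may be replaced by step
matrices with few parts, so only the masses the coupling gives to pairs of parts matter. Rounding
these masses down to multiples of `1 / n` makes them realisable by a permutation `π`, and then `G`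
relabelled by `π` is close to `W` without any further rearrangement. As `G` is determined by `π`
and its relabelling, this costs a factor of at most `n!`. Finally `W̄_n → W` almost everywhere by
Lebesgue differentiation, so `d_□(W̄_n, W) → 0`.
-/

section CutNorm

variable {α β : Type*} [MeasurableSpace α] [MeasurableSpace β]

lemma exists_integral_le_setIntegral_of_le {μ ν : Measure α} {h : α → ℝ}
    (hh : Integrable h μ) (hνμ : ν ≤ μ) :
    ∃ S, MeasurableSet S ∧ ∫ x, h x ∂ν ≤ ∫ x in S, h x ∂μ := by
  obtain ⟨g, hg, hhg⟩ := hh.aestronglyMeasurable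
  have hS : MeasurableSet {x | 0 < g x} := measurableSet_lt measurable_const hg.measurable
  have hg_int : Integrable g μ := hh.congr hhg
  refine ⟨{x | 0 < g x}, hS, ?_⟩
  calc ∫ x, h x ∂ν = ∫ x, g x ∂ν :=
        integral_congr_ae (Measure.absolutelyContinuous_of_le hνμ hhg)
    _ ≤ ∫ x, max (g x) 0 ∂ν :=
        integral_mono (hg_int.mono_measure hνμ) (hg_int.mono_measure hνμ).pos_part
          fun x ↦ le_max_left _ _
    _ ≤ ∫ x, max (g x) 0 ∂μ :=
        integral_mono_measure hνμ (ae_of_all _ fun x ↦ le_max_right _ _) hg_int.pos_part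
    _ = ∫ x in {x | 0 < g x}, g x ∂μ := by
        rw [← integral_indicator hS]
        congr with x
        by_cases hx : 0 < g x
        · simp [indicator, hx, hx.le]
        · simp [indicator, hx, not_lt.1 hx]
    _ = ∫ x in {x | 0 < g x}, h x ∂μ := integral_congr_ae (ae_restrict_of_ae hhg.symm)

lemma exists_integral_prod_le_setIntegral_of_le {μ μ' : Measure α} {ν ν' : Measure β}
    [SFinite μ] [SFinite μ'] [SFinite ν] [SFinite ν'] {U : α × β → ℝ}
    (hU : Integrable U (μ.prod ν)) (hμ : μ' ≤ μ) (hν : ν' ≤ ν) :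
    ∃ S T, MeasurableSet S ∧ MeasurableSet T ∧
      ∫ p, U p ∂μ'.prod ν' ≤ ∫ p in S ×ˢ T, U p ∂μ.prod ν := by
  have hU' : Integrable U (μ.prod ν') := hU.mono_measure (Measure.prod_mono le_rfl hν)
  obtain ⟨S, hS, hST⟩ := exists_integral_le_setIntegral_of_le hU'.integral_prod_left hμ
  have hUS : Integrable U ((μ.restrict S).prod ν) :=
    hU.mono_measure (Measure.prod_mono Measure.restrict_le_self le_rfl)
  obtain ⟨T, hT, hTS⟩ := exists_integral_le_setIntegral_of_le hUS.integral_prod_right hν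
  refine ⟨S, T, hS, hT, ?_⟩
  calc ∫ p, U p ∂μ'.prod ν' = ∫ x, ∫ y, U (x, y) ∂ν' ∂μ' :=
        integral_prod _ (hU'.mono_measure (Measure.prod_mono hμ le_rfl))
    _ ≤ ∫ x in S, ∫ y, U (x, y) ∂ν' ∂μ := hST
    _ = ∫ y, ∫ x in S, U (x, y) ∂μ ∂ν' :=
        integral_integral_swap (hUS.mono_measure (Measure.prod_mono le_rfl hν))
    _ ≤ ∫ y in T, ∫ x in S, U (x, y) ∂μ ∂ν := hTS
    _ = ∫ p in S ×ˢ T, U p ∂μ.prod ν := by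
        rw [← Measure.prod_restrict, integral_prod_symm _
          (hUS.mono_measure (Measure.prod_mono le_rfl Measure.restrict_le_self))]

/-- The cut norm of the kernel `U` on the measure space `(α, μ)` is at most `c`. Stating the
bound instead of the supremum avoids the junk value of `sSup` on unbounded sets. -/
def CutNormLE (μ : Measure α) (U : α × α → ℝ) (c : ℝ) : Prop :=
  ∀ S T, MeasurableSet S → MeasurableSet T → |∫ p in S ×ˢ T, U p ∂μ.prod μ| ≤ c

namespace CutNormLE

variable {μ : Measure α} {U V : α × α → ℝ} {c d : ℝ}

lemma mono (h : CutNormLE μ U c) (hcd : c ≤ d) : CutNormLE μ U d :=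
  fun S T hS hT ↦ (h S T hS hT).trans hcd

lemma congr_ae (h : CutNormLE μ U c) (hUV : U =ᵐ[μ.prod μ] V) : CutNormLE μ V c := by
  intro S T hS hT
  rw [← integral_congr_ae (ae_restrict_of_ae hUV)]
  exact h S T hS hT

lemma neg (h : CutNormLE μ U c) : CutNormLE μ (-U) c := by
  intro S T hS hT
  simpa only [Pi.neg_apply, integral_neg, abs_neg] using h S T hS hT

lemma add (hU : Integrable U (μ.prod μ)) (hV : Integrable V (μ.prod μ))
    (h : CutNormLE μ U c) (h' : CutNormLE μ V d) : CutNormLE μ (U + V) (c + d) := by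
  intro S T hS hT
  simp only [Pi.add_apply]
  rw [integral_add hU.integrableOn hV.integrableOn]
  exact (abs_add_le _ _).trans (add_le_add (h S T hS hT) (h' S T hS hT))

lemma sub_comm (h : CutNormLE μ (U - V) c) : CutNormLE μ (V - U) c :=
  neg_sub U V ▸ h.neg

lemma triangle {T : α × α → ℝ} (hU : Integrable U (μ.prod μ)) (hV : Integrable V (μ.prod μ))
    (hT : Integrable T (μ.prod μ)) (hUV : CutNormLE μ (U - V) c) (hVT : CutNormLE μ (V - T) d) :
    CutNormLE μ (U - T) (c + d) :=
  sub_add_sub_cancel U V T ▸ add (hU.sub hV) (hV.sub hT) hUV hVT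

lemma abs_integral_prod_le [SFinite μ] {ν₁ ν₂ : Measure α} [SFinite ν₁] [SFinite ν₂]
    (hU : Integrable U (μ.prod μ)) (h : CutNormLE μ U c) (h₁ : ν₁ ≤ μ) (h₂ : ν₂ ≤ μ) :
    |∫ p, U p ∂ν₁.prod ν₂| ≤ c := by
  refine abs_le'.2 ⟨?_, ?_⟩
  · obtain ⟨S, T, hS, hT, hST⟩ := exists_integral_prod_le_setIntegral_of_le hU h₁ h₂
    exact hST.trans ((le_abs_self _).trans (h S T hS hT))
  · obtain ⟨S, T, hS, hT, hST⟩ := exists_integral_prod_le_setIntegral_of_le hU.neg h₁ h₂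
    rw [← integral_neg]
    exact hST.trans ((le_abs_self _).trans (h.neg S T hS hT))

lemma of_measurePreserving {ν : Measure β} [SFinite μ] [SFinite ν] {φ : β → α}
    (hφ : MeasurePreserving φ ν μ) (hU : Integrable U (μ.prod μ))
    (h : CutNormLE ν (U ∘ Prod.map φ φ) c) : CutNormLE μ U c := by
  intro S T hS hT
  have hφφ := (hφ.prod hφ).restrict_preimage (hS.prod hT)
  rw [← hφφ.map_eq, integral_map hφφ.measurable.aemeasurable
    (hφφ.map_eq ▸ hU.aestronglyMeasurable.restrict)]
  exact h (φ ⁻¹' S) (φ ⁻¹' T) (hφ.measurable hS) (hφ.measurable hT)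

lemma comp_measurePreserving {ν : Measure β} [SFinite μ] [IsFiniteMeasure ν] {φ : β → α}
    (hφ : MeasurePreserving φ ν μ) (hU : Integrable U (μ.prod μ)) (h : CutNormLE μ U c) :
    CutNormLE ν (U ∘ Prod.map φ φ) c := by
  intro S T _ _
  have hle (S : Set β) : (ν.restrict S).map φ ≤ μ :=
    hφ.map_eq ▸ Measure.map_mono Measure.restrict_le_self hφ.measurable
  have hprod := Measure.map_prod_map (ν.restrict S) (ν.restrict T) hφ.measurable hφ.measurable
  have hint := h.abs_integral_prod_le hU (hle S) (hle T)
  rw [hprod, integral_map (hφ.measurable.prodMap hφ.measurable).aemeasurable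
    (hprod ▸ (hU.mono_measure (Measure.prod_mono (hle S) (hle T))).aestronglyMeasurable)] at hint
  rwa [← Measure.prod_restrict]

end CutNormLE

lemma cutNormLE_integral_norm {μ : Measure α} {U : α × α → ℝ} (hU : Integrable U (μ.prod μ)) :
    CutNormLE μ U (∫ p, ‖U p‖ ∂μ.prod μ) :=
  fun S T _ _ ↦ (norm_integral_le_integral_norm (μ := (μ.prod μ).restrict (S ×ˢ T)) U).trans
    (setIntegral_le_integral hU.norm (ae_of_all _ fun _ ↦ norm_nonneg _))

lemma abs_integral_sub_integral_le_of_le {μ ν : Measure α} [IsFiniteMeasure ν] {f : α → ℝ}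
    {M : ℝ} (hf : Integrable f ν) (hM : ∀ x, ‖f x‖ ≤ M) (hμν : μ ≤ ν) :
    |∫ x, f x ∂ν - ∫ x, f x ∂μ| ≤ M * (ν.real univ - μ.real univ) := by
  have := isFiniteMeasure_of_le ν hμν
  have hsum : ν - μ + μ = ν := Measure.sub_add_cancel_of_le hμν
  have hf' : Integrable f (ν - μ + μ) := hsum.symm ▸ hf
  have hint : ∫ x, f x ∂ν = ∫ x, f x ∂(ν - μ) + ∫ x, f x ∂μ := by
    rw [← integral_add_measure hf'.left_of_add_measure hf'.right_of_add_measure, hsum]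
  have huniv : ν.real univ = (ν - μ).real univ + μ.real univ := by
    rw [← measureReal_add_apply, hsum]
  rw [hint, huniv, add_sub_cancel_right, add_sub_cancel_right]
  exact norm_integral_le_of_norm_le_const (ae_of_all _ hM)

lemma CutNormLE.of_common_le {μ μ' ρ : Measure α} [IsFiniteMeasure μ] [IsFiniteMeasure μ']
    {U : α × α → ℝ} {c M : ℝ} (hU : Measurable U) (hM : ∀ p, ‖U p‖ ≤ M)
    (h : CutNormLE μ U c) (hρ : ρ ≤ μ) (hρ' : ρ ≤ μ') :
    CutNormLE μ' U (c + M * (μ'.real univ ^ 2 - ρ.real univ ^ 2)) := by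
  intro S T hS hT
  have := isFiniteMeasure_of_le μ hρ
  have hint (ν : Measure (α × α)) [IsFiniteMeasure ν] : Integrable U ν :=
    .of_bound hU.aestronglyMeasurable M (ae_of_all _ hM)
  have hρST : |∫ p in S ×ˢ T, U p ∂ρ.prod ρ| ≤ c := by
    rw [← Measure.prod_restrict]
    exact h.abs_integral_prod_le (hint _) (Measure.restrict_le_self.trans hρ)
      (Measure.restrict_le_self.trans hρ)
  have hdiff := abs_integral_sub_integral_le_of_le ((hint _).indicator (hS.prod hT))
    (fun p ↦ (norm_indicator_le_norm_self U p).trans (hM p)) (Measure.prod_mono hρ' hρ')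
  rw [integral_indicator (hS.prod hT), integral_indicator (hS.prod hT), ← univ_prod_univ,
    measureReal_prod_prod, measureReal_prod_prod, ← sq, ← sq] at hdiff
  have := abs_sub_abs_le_abs_sub (∫ p in S ×ˢ T, U p ∂μ'.prod μ') (∫ p in S ×ˢ T, U p ∂ρ.prod ρ)
  linarith

end CutNorm

section WeakRegularity

variable {α : Type*} [MeasurableSpace α] {μ : Measure α} [IsProbabilityMeasure μ]

lemma exists_integral_sq_sub_indicator_lt {V : α × α → ℝ} {ε : ℝ} (hV : MemLp V 2 (μ.prod μ))
    (hε : 0 < ε) (hVε : ¬ CutNormLE μ V ε) :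
    ∃ S T s, MeasurableSet S ∧ MeasurableSet T ∧ |s| ≤ ε ∧
      ∫ p, (V p - (S ×ˢ T).indicator (fun _ ↦ s) p) ^ 2 ∂μ.prod μ <
        ∫ p, V p ^ 2 ∂μ.prod μ - ε ^ 2 := by
  simp only [CutNormLE, not_forall, not_le] at hVε
  obtain ⟨S, T, hS, hT, hST⟩ := hVε
  obtain ⟨s, hs, hsI⟩ : ∃ s : ℝ, |s| = ε ∧
      s * ∫ p in S ×ˢ T, V p ∂μ.prod μ = ε * |∫ p in S ×ˢ T, V p ∂μ.prod μ| := by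
    rcases abs_cases (∫ p in S ×ˢ T, V p ∂μ.prod μ) with ⟨h, -⟩ | ⟨h, -⟩
    · exact ⟨ε, abs_of_pos hε, by rw [h]⟩
    · exact ⟨-ε, by rw [abs_neg, abs_of_pos hε], by rw [h]; ring⟩
  refine ⟨S, T, s, hS, hT, hs.le, ?_⟩
  have hexpand (p : α × α) : (V p - (S ×ˢ T).indicator (fun _ ↦ s) p) ^ 2 =
      V p ^ 2 + (S ×ˢ T).indicator (fun p ↦ s ^ 2 - 2 * s * V p) p := by
    by_cases hp : p ∈ S ×ˢ T <;> simp only [hp, indicator_of_mem, indicator_of_notMem,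
      not_false_eq_true] <;> ring
  have hVint : Integrable V (μ.prod μ) := hV.integrable one_le_two
  have hint : Integrable (fun p ↦ s ^ 2 - 2 * s * V p) (μ.prod μ) :=
    (integrable_const _).sub (hVint.const_mul _)
  simp_rw [hexpand]
  rw [integral_add hV.integrable_sq (hint.indicator (hS.prod hT)),
    integral_indicator (hS.prod hT), integral_sub (integrable_const _)
      (hVint.integrableOn.const_mul _), integral_const_mul, setIntegral_const, smul_eq_mul,
    mul_assoc, hsI, ← sq_abs s, hs]
  have hle : (μ.prod μ).real (S ×ˢ T) * ε ^ 2 ≤ 1 * ε ^ 2 := by gcongr; exact measureReal_le_one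
  nlinarith

lemma exists_partition_indicator_add {m : ℕ} {S T : Set α} (hS : MeasurableSet S)
    (hT : MeasurableSet T) (s : ℝ) {P : α → Fin m → Bool × Bool} (hP : Measurable P)
    {a : (Fin m → Bool × Bool) × (Fin m → Bool × Bool) → ℝ} {C : ℝ} (ha : ∀ q, |a q| ≤ C) :
    ∃ (P' : α → Fin (m + 1) → Bool × Bool)
      (a' : (Fin (m + 1) → Bool × Bool) × (Fin (m + 1) → Bool × Bool) → ℝ),
      Measurable P' ∧ (∀ q, |a' q| ≤ |s| + C) ∧
        a' ∘ Prod.map P' P' = (S ×ˢ T).indicator (fun _ ↦ s) + a ∘ Prod.map P P := by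
  classical
  refine ⟨fun x ↦ Fin.cons (decide (x ∈ S), decide (x ∈ T)) (P x),
    fun q ↦ (if (q.1 0).1 ∧ (q.2 0).2 then s else 0) + a (Fin.tail q.1, Fin.tail q.2),
    ?_, fun q ↦ (abs_add_le _ _).trans (add_le_add ?_ (ha _)), ?_⟩
  · refine measurable_pi_iff.2 (Fin.cases ?_ fun i ↦ ?_)
    · simp only [Fin.cons_zero]
      exact (measurable_to_bool (by simpa [preimage] using hS)).prodMk
        (measurable_to_bool (by simpa [preimage] using hT))
    · simpa only [Fin.cons_succ] using measurable_pi_iff.1 hP i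
  · split_ifs
    · exact le_rfl
    · simp
  · ext p
    simp [indicator, Fin.tail_cons, Prod.map]

lemma exists_partition_cutNormLE {ε : ℝ} (hε : 0 < ε) (m : ℕ) {U : α × α → ℝ}
    (hU : MemLp U 2 (μ.prod μ)) (hUm : ∫ p, U p ^ 2 ∂μ.prod μ ≤ m * ε ^ 2) :
    ∃ (P : α → Fin m → Bool × Bool) (a : (Fin m → Bool × Bool) × (Fin m → Bool × Bool) → ℝ),
      Measurable P ∧ (∀ q, |a q| ≤ m * ε) ∧ CutNormLE μ (U - a ∘ Prod.map P P) ε := by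
  induction m generalizing U with
  | zero =>
    refine ⟨fun _ ↦ default, 0, measurable_const, by simp, ?_⟩
    by_contra hcut
    obtain ⟨S, T, s, -, -, -, hlt⟩ :=
      exists_integral_sq_sub_indicator_lt hU hε (by simpa using hcut)
    have hnonneg : 0 ≤ ∫ p, (U p - (S ×ˢ T).indicator (fun _ ↦ s) p) ^ 2 ∂μ.prod μ :=
      integral_nonneg fun p ↦ sq_nonneg _
    simp only [Nat.cast_zero, zero_mul] at hUm
    nlinarith
  | succ m ih =>
    by_cases hcut : CutNormLE μ U ε
    · refine ⟨fun _ ↦ default, 0, measurable_const, fun q ↦ ?_, by simpa using hcut⟩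
      simp only [Pi.zero_apply, abs_zero]
      positivity
    obtain ⟨S, T, s, hS, hT, hs, hlt⟩ := exists_integral_sq_sub_indicator_lt hU hε hcut
    obtain ⟨P, a, hP, ha, hPa⟩ := ih
      (U := U - (S ×ˢ T).indicator fun _ ↦ s)
      (hU.sub (memLp_indicator_const 2 (hS.prod hT) s (.inr (measure_ne_top _ _))))
      (by push_cast at hUm; simp only [Pi.sub_apply]; linarith)
    obtain ⟨P', a', hP', ha', hPa'⟩ := exists_partition_indicator_add hS hT s hP ha
    refine ⟨P', a', hP', fun q ↦ (ha' q).trans ?_, by rwa [hPa', ← sub_sub]⟩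
    push_cast
    linarith

lemma exists_partition_cutNormLE_of_abs_le_one {m : ℕ} (hm : 0 < m) {U : α × α → ℝ}
    (hU : AEStronglyMeasurable U (μ.prod μ)) (hU1 : ∀ p, |U p| ≤ 1) :
    ∃ (P : α → Fin m → Bool × Bool) (a : (Fin m → Bool × Bool) × (Fin m → Bool × Bool) → ℝ),
      Measurable P ∧ (∀ q, |a q| ≤ √m) ∧ CutNormLE μ (U - a ∘ Prod.map P P) (1 / √m) := by
  have hL2 : MemLp U 2 (μ.prod μ) := .of_bound hU 1 (ae_of_all _ hU1)
  have henergy : ∫ p, U p ^ 2 ∂μ.prod μ ≤ 1 := by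
    simpa using integral_mono hL2.integrable_sq (integrable_const 1)
      fun p ↦ (sq_le_one_iff_abs_le_one _).2 (hU1 p)
  obtain ⟨P, a, hP, ha, hPa⟩ := exists_partition_cutNormLE (ε := 1 / √m) (by positivity) m hL2
    (henergy.trans_eq (by field_simp; rw [Real.sq_sqrt m.cast_nonneg]))
  refine ⟨P, a, hP, fun q ↦ (ha q).trans_eq ?_, hPa⟩
  rw [mul_one_div, Real.div_sqrt]

end WeakRegularity

section Rounding

variable {ι κ L R : Type*} [Finite ι]

lemma exists_embedding_forall_apply_eq [Finite κ] {P : ι → L} {k : κ → L}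
    (h : ∀ p, Nat.card {t // k t = p} ≤ Nat.card {i // P i = p}) :
    ∃ e : κ ↪ ι, ∀ t, P (e t) = k t := by
  classical
  have := Fintype.ofFinite ι
  have := Fintype.ofFinite κ
  have hemb (p : L) : Nonempty ({t // k t = p} ↪ {i // P i = p}) :=
    Function.Embedding.nonempty_of_card_le (by simpa only [Nat.card_eq_fintype_card] using h p)
  let g (p : L) := (hemb p).some
  exact ⟨(Equiv.sigmaFiberEquiv k).symm.toEmbedding.trans
    ((Function.Embedding.sigmaMap (.refl L) g).trans (Equiv.sigmaFiberEquiv P).toEmbedding),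
    fun t ↦ (g (k t) ⟨t, rfl⟩).2⟩

lemma exists_perm_forall_apply_eq (e₁ e₂ : κ ↪ ι) : ∃ π : Equiv.Perm ι, ∀ t, π (e₂ t) = e₁ t := by
  classical
  have := Fintype.ofFinite ι
  let e : range e₂ ≃ range e₁ :=
    (Equiv.ofInjective e₂ e₂.injective).symm.trans (Equiv.ofInjective e₁ e₁.injective)
  refine ⟨e.extendSubtype, fun t ↦ ?_⟩
  rw [e.extendSubtype_apply_of_mem (e₂ t) (mem_range_self t)]
  simp [e, Equiv.ofInjective_symm_apply]

lemma card_sigma_fin_fiber {U : Type*} [Fintype U] [DecidableEq L] (N : U → ℕ) (f : U → L)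
    (p : L) : Nat.card {t : Σ u, Fin (N u) // f t.1 = p} = ∑ u with f u = p, N u := by
  rw [Nat.card_eq_fintype_card, Fintype.card_subtype]
  have : (Finset.univ.filter fun t : Σ u, Fin (N u) ↦ f t.1 = p) =
      (Finset.univ.filter fun u ↦ f u = p).sigma fun u ↦ Finset.univ := by ext; simp
  simp [this]

lemma exists_perm_le_card_fiber [Fintype L] [Fintype R] [DecidableEq L] [DecidableEq R]
    {P : ι → L} {Q : ι → R} {N : L × R → ℕ}
    (hP : ∀ p, ∑ u with u.1 = p, N u ≤ Nat.card {i // P i = p})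
    (hQ : ∀ q, ∑ u with u.2 = q, N u ≤ Nat.card {i // Q i = q}) :
    ∃ π : Equiv.Perm ι, ∀ u, N u ≤ Nat.card {i // (P (π i), Q i) = u} := by
  obtain ⟨e₁, he₁⟩ : ∃ e₁ : (Σ u, Fin (N u)) ↪ ι, ∀ t, P (e₁ t) = t.1.1 :=
    exists_embedding_forall_apply_eq fun p ↦ (card_sigma_fin_fiber N Prod.fst p).trans_le (hP p)
  obtain ⟨e₂, he₂⟩ : ∃ e₂ : (Σ u, Fin (N u)) ↪ ι, ∀ t, Q (e₂ t) = t.1.2 :=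
    exists_embedding_forall_apply_eq fun q ↦ (card_sigma_fin_fiber N Prod.snd q).trans_le (hQ q)
  obtain ⟨π, hπ⟩ := exists_perm_forall_apply_eq e₁ e₂
  refine ⟨π, fun u ↦ ?_⟩
  rw [← Nat.card_fin (N u)]
  refine Nat.card_le_card_of_injective
    (fun j ↦ ⟨e₂ ⟨u, j⟩, by rw [hπ, he₁, he₂]⟩) fun j j' hjj' ↦ ?_
  simpa using hjj'

end Rounding

section DiscreteCoupling

open ProbabilityTheory

lemma measure_le_of_forall_real_singleton_le {α : Type*} [Finite α] [MeasurableSpace α]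
    [MeasurableSingletonClass α] {μ ν : Measure α} [IsFiniteMeasure μ] [IsFiniteMeasure ν]
    (h : ∀ x, μ.real {x} ≤ ν.real {x}) : μ ≤ ν := by
  refine Measure.le_iff.2 fun s _ ↦ ?_
  rw [← s.toFinite.coe_toFinset, ← sum_measure_singleton, ← sum_measure_singleton]
  exact Finset.sum_le_sum fun x _ ↦
    (ENNReal.toReal_le_toReal (measure_ne_top _ _) (measure_ne_top _ _)).1 (h x)

lemma exists_measure_real_singleton_eq {α : Type*} [Finite α] [MeasurableSpace α]
    [MeasurableSingletonClass α] {w : α → ℝ} (hw : ∀ x, 0 ≤ w x) :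
    ∃ ρ : Measure α, IsFiniteMeasure ρ ∧ ∀ x, ρ.real {x} = w x := by
  have := Fintype.ofFinite α
  refine ⟨Measure.count.withDensity fun x ↦ ENNReal.ofReal (w x),
    isFiniteMeasure_withDensity (by simp [lintegral_count, tsum_fintype]), fun x ↦ ?_⟩
  simp [measureReal_def, hw x]

variable {ι L R : Type*} [Fintype ι] [Nonempty ι] [MeasurableSpace ι]
  [MeasurableSingletonClass ι] [MeasurableSpace L] [MeasurableSingletonClass L]

lemma card_mul_real_uniformOn_univ (s : Set ι) :
    Fintype.card ι * (uniformOn univ).real s = Nat.card s := by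
  have : (Fintype.card ι : ℝ) ≠ 0 := by positivity
  rw [measureReal_def, uniformOn_univ, Measure.count_apply_finite s s.toFinite,
    ENNReal.toReal_div, ENNReal.toReal_natCast, ENNReal.toReal_natCast, mul_div_cancel₀ _ this,
    Nat.card_coe_set_eq, ncard_eq_toFinset_card s]

lemma sum_floor_fiber_le {U : Type*} [Fintype U] [MeasurableSpace U] [MeasurableSingletonClass U]
    [DecidableEq L] {γ : Measure U} [IsFiniteMeasure γ] {f : U → L} {P : ι → L}
    (h : γ.map f = (uniformOn univ).map P) (p : L) :
    ∑ u with f u = p, ⌊Fintype.card ι * γ.real {u}⌋₊ ≤ Nat.card {i // P i = p} := by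
  have hfiber : γ.real (f ⁻¹' {p}) = (uniformOn univ).real (P ⁻¹' {p}) := by
    rw [← map_measureReal_apply .of_discrete (measurableSet_singleton p), h,
      map_measureReal_apply .of_discrete (measurableSet_singleton p)]
  suffices (∑ u with f u = p, ⌊Fintype.card ι * γ.real {u}⌋₊ : ℝ) ≤ Nat.card {i // P i = p} by
    exact_mod_cast this
  calc (∑ u with f u = p, ⌊Fintype.card ι * γ.real {u}⌋₊ : ℝ)
      ≤ ∑ u with f u = p, Fintype.card ι * γ.real {u} :=
        Finset.sum_le_sum fun u _ ↦ Nat.floor_le (by positivity)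
    _ = Fintype.card ι * γ.real (f ⁻¹' {p}) := by
        rw [← Finset.mul_sum, sum_measureReal_singleton, Finset.coe_filter_univ]; rfl
    _ = Nat.card {i // P i = p} := by rw [hfiber, card_mul_real_uniformOn_univ]; rfl

variable [Fintype L] [Fintype R] [MeasurableSpace R] [MeasurableSingletonClass R]

-- Rounding `γ` down to multiples of `1 / |ι|` loses at most `1 / |ι|` per point of `L × R`.
lemma exists_perm_exists_le_coupling {P : ι → L} {Q : ι → R} {γ : Measure (L × R)}
    [IsProbabilityMeasure γ] (hP : γ.map Prod.fst = (uniformOn univ).map P)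
    (hQ : γ.map Prod.snd = (uniformOn univ).map Q) :
    ∃ (π : Equiv.Perm ι) (ρ : Measure (L × R)),
      ρ ≤ γ ∧ ρ ≤ (uniformOn univ).map (fun i ↦ (P (π i), Q i)) ∧
        1 - (Fintype.card L * Fintype.card R : ℝ) / Fintype.card ι ≤ ρ.real univ := by
  classical
  obtain ⟨π, hπ⟩ := exists_perm_le_card_fiber (sum_floor_fiber_le hP) (sum_floor_fiber_le hQ)
  have hn : (0 : ℝ) < Fintype.card ι := by positivity
  obtain ⟨ρ, _, hρ⟩ := exists_measure_real_singleton_eq (α := L × R)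
    (w := fun u ↦ ⌊Fintype.card ι * γ.real {u}⌋₊ / Fintype.card ι) (fun u ↦ by positivity)
  refine ⟨π, ρ, measure_le_of_forall_real_singleton_le fun u ↦ ?_,
    measure_le_of_forall_real_singleton_le fun u ↦ ?_, ?_⟩
  · rw [hρ, div_le_iff₀' hn]
    exact Nat.floor_le (by positivity)
  · rw [hρ, div_le_iff₀' hn, map_measureReal_apply .of_discrete (measurableSet_singleton u),
      card_mul_real_uniformOn_univ]
    exact_mod_cast hπ u
  · have hloss (u : L × R) : γ.real {u} - 1 / Fintype.card ι ≤ ρ.real {u} := by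
      rw [hρ, le_div_iff₀ hn, sub_mul, one_div_mul_cancel hn.ne', mul_comm]
      exact (Nat.sub_one_lt_floor _).le
    calc 1 - (Fintype.card L * Fintype.card R : ℝ) / Fintype.card ι
        = ∑ u : L × R, (γ.real {u} - 1 / Fintype.card ι) := by
          rw [Finset.sum_sub_distrib, sum_measureReal_singleton, Finset.coe_univ, probReal_univ]
          simp [div_eq_mul_inv]
      _ ≤ ∑ u : L × R, ρ.real {u} := Finset.sum_le_sum fun u _ ↦ hloss u
      _ = ρ.real univ := by rw [sum_measureReal_singleton, Finset.coe_univ]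

end DiscreteCoupling

section DiscreteRelabelling

open ProbabilityTheory

lemma four_mul_mul_sixteen_pow_le (m : ℕ) : 4 * m * 16 ^ m ≤ 2 ^ (8 * m) := by
  have h4 : 4 * m ≤ 16 ^ m := by
    induction m with
    | zero => simp
    | succ m ih =>
      have := Nat.one_le_pow m 16 (by norm_num)
      rw [pow_succ]
      lia
  calc 4 * m * 16 ^ m ≤ 16 ^ m * 16 ^ m := by gcongr
    _ = 2 ^ (8 * m) := by rw [← mul_pow, pow_mul]; norm_num

lemma measurePreserving_uniformOn_univ {ι : Type*} [Finite ι] [MeasurableSpace ι]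
    [MeasurableSingletonClass ι] (π : Equiv.Perm ι) :
    MeasurePreserving π (uniformOn univ) (uniformOn univ) := by
  have := Fintype.ofFinite ι
  refine ⟨.of_discrete, Measure.ext fun s hs ↦ ?_⟩
  rw [Measure.map_apply .of_discrete hs, uniformOn_univ, uniformOn_univ, Measure.count_apply hs,
    Measure.count_apply (.of_discrete), encard_preimage_of_bijective π.bijective]

variable {ι : Type*} [Fintype ι] [Nonempty ι] [MeasurableSpace ι] [MeasurableSingletonClass ι]
  {γ : Measure (ι × ι)} [IsProbabilityMeasure γ]

lemma exists_perm_cutNormLE_of_partitions {L R : Type*} [Fintype L] [Fintype R]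
    [MeasurableSpace L] [MeasurableSpace R] [MeasurableSingletonClass L]
    [MeasurableSingletonClass R] (hfst : MeasurePreserving Prod.fst γ (uniformOn univ))
    (hsnd : MeasurePreserving Prod.snd γ (uniformOn univ)) {P : ι → L} {Q : ι → R}
    {a : L × L → ℝ} {b : R × R → ℝ} {M c : ℝ} (ha : ∀ q, |a q| ≤ M) (hb : ∀ q, |b q| ≤ M)
    (h : CutNormLE γ ((a ∘ Prod.map P P) ∘ Prod.map Prod.fst Prod.fst -
      (b ∘ Prod.map Q Q) ∘ Prod.map Prod.snd Prod.snd) c) :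
    ∃ π : Equiv.Perm ι, CutNormLE (uniformOn univ)
      ((a ∘ Prod.map P P) ∘ Prod.map π π - b ∘ Prod.map Q Q)
      (c + 4 * M * (Fintype.card L * Fintype.card R / Fintype.card ι)) := by
  set D : (L × R) × (L × R) → ℝ := a ∘ Prod.map Prod.fst Prod.fst - b ∘ Prod.map Prod.snd Prod.snd
  have hD (p) : ‖D p‖ ≤ 2 * M :=
    (norm_sub_le _ _).trans (by rw [two_mul]; exact add_le_add (ha _) (hb _))
  have : IsProbabilityMeasure (γ.map (Prod.map P Q)) :=
    Measure.isProbabilityMeasure_map (by fun_prop)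
  obtain ⟨π, ρ, hργ, hρπ, hρ⟩ := exists_perm_exists_le_coupling (γ := γ.map (Prod.map P Q))
    (P := P) (Q := Q)
    (by rw [← hfst.map_eq, Measure.map_map .of_discrete .of_discrete,
      Measure.map_map .of_discrete .of_discrete, Prod.map_fst'])
    (by rw [← hsnd.map_eq, Measure.map_map .of_discrete .of_discrete,
      Measure.map_map .of_discrete .of_discrete, Prod.map_snd'])
  have : IsProbabilityMeasure ((uniformOn univ).map fun i ↦ (P (π i), Q i)) :=
    Measure.isProbabilityMeasure_map (by fun_prop)
  have hDγ : CutNormLE (γ.map (Prod.map P Q)) D c :=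
    .of_measurePreserving ⟨.of_discrete, rfl⟩ .of_finite h
  have hDπ := (hDγ.of_common_le .of_discrete hD hργ hρπ).comp_measurePreserving
    (φ := fun i ↦ (P (π i), Q i)) ⟨.of_discrete, rfl⟩ .of_finite
  refine ⟨π, hDπ.mono (add_le_add le_rfl ?_)⟩
  have hM : 0 ≤ M := (abs_nonneg _).trans (ha (Classical.arbitrary (ι × ι) |>.map P P))
  rw [probReal_univ]
  calc 2 * M * (1 ^ 2 - ρ.real univ ^ 2) ≤ 2 * M * (2 * (1 - ρ.real univ)) := by
        gcongr
        linarith [sq_nonneg (1 - ρ.real univ)]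
    _ ≤ 2 * M * (2 * (Fintype.card L * Fintype.card R / Fintype.card ι)) := by
        gcongr
        linarith
    _ = 4 * M * (Fintype.card L * Fintype.card R / Fintype.card ι) := by ring

lemma exists_perm_cutNormLE_of_coupling (hfst : MeasurePreserving Prod.fst γ (uniformOn univ))
    (hsnd : MeasurePreserving Prod.snd γ (uniformOn univ)) {A B : ι × ι → ℝ} {c : ℝ}
    (hA : ∀ p, |A p| ≤ 1) (hB : ∀ p, |B p| ≤ 1)
    (h : CutNormLE γ (A ∘ Prod.map Prod.fst Prod.fst - B ∘ Prod.map Prod.snd Prod.snd) c)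
    {m : ℕ} (hm : 0 < m) (hcard : 2 ^ (8 * m) ≤ Fintype.card ι) :
    ∃ π : Equiv.Perm ι,
      CutNormLE (uniformOn univ) (A ∘ Prod.map π π - B) (c + 5 / √m) := by
  obtain ⟨P, a, -, ha, hPa⟩ := exists_partition_cutNormLE_of_abs_le_one
    (μ := uniformOn (univ : Set ι)) hm .of_discrete hA
  obtain ⟨Q, b, -, hb, hQb⟩ := exists_partition_cutNormLE_of_abs_le_one
    (μ := uniformOn (univ : Set ι)) hm .of_discrete hB
  obtain ⟨π, hπ⟩ := exists_perm_cutNormLE_of_partitions hfst hsnd ha hb <|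
    ((hPa.sub_comm.comp_measurePreserving hfst .of_finite).triangle
      .of_finite .of_finite .of_finite h).triangle .of_finite .of_finite .of_finite
      (hQb.comp_measurePreserving hsnd .of_finite)
  have hPπ := hPa.comp_measurePreserving (measurePreserving_uniformOn_univ π) .of_finite
  refine ⟨π, ((hPπ.triangle .of_finite .of_finite .of_finite hπ).triangle
    .of_finite .of_finite .of_finite hQb.sub_comm).mono ?_⟩
  have hloss : 4 * √m * (Fintype.card (Fin m → Bool × Bool) *
      Fintype.card (Fin m → Bool × Bool) / Fintype.card ι) ≤ 1 / √m := by
    have hcard' : (4 * m * 16 ^ m : ℝ) / Fintype.card ι ≤ 1 := by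
      rw [div_le_one (by positivity)]
      exact_mod_cast (four_mul_mul_sixteen_pow_le m).trans hcard
    have hsq : √(m : ℝ) * √m = m := Real.mul_self_sqrt m.cast_nonneg
    have hL : (Fintype.card (Fin m → Bool × Bool) : ℝ) = 4 ^ m := by simp
    rw [hL, ← mul_pow, le_div_iff₀ (by positivity), show (4 * 4 : ℝ) = 16 by norm_num]
    linear_combination hcard' + 4 * 16 ^ m / Fintype.card ι * hsq
  linear_combination hloss

lemma exists_perm_cutNormLE_of_measurePreserving {Ω : Type*} [MeasurableSpace Ω] {μ : Measure Ω}
    [IsProbabilityMeasure μ] {f g : Ω → ι} (hf : MeasurePreserving f μ (uniformOn univ))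
    (hg : MeasurePreserving g μ (uniformOn univ)) {A B : ι × ι → ℝ} {c : ℝ}
    (hA : ∀ p, |A p| ≤ 1) (hB : ∀ p, |B p| ≤ 1)
    (h : CutNormLE μ (A ∘ Prod.map f f - B ∘ Prod.map g g) c) {m : ℕ} (hm : 0 < m)
    (hcard : 2 ^ (8 * m) ≤ Fintype.card ι) :
    ∃ π : Equiv.Perm ι, CutNormLE (uniformOn univ) (A ∘ Prod.map π π - B) (c + 5 / √m) := by
  have hfg : Measurable fun x ↦ (f x, g x) := hf.measurable.prodMk hg.measurable
  have := Measure.isProbabilityMeasure_map (μ := μ) hfg.aemeasurable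
  exact exists_perm_cutNormLE_of_coupling
    (.map_of_comp (f := fun x ↦ (f x, g x)) (g := Prod.fst) hf measurable_fst hfg)
    (.map_of_comp (f := fun x ↦ (f x, g x)) (g := Prod.snd) hg measurable_snd hfg) hA hB
    (.of_measurePreserving (hfg.measurePreserving μ) .of_finite h) hm hcard

end DiscreteRelabelling

section UnitInterval

open ProbabilityTheory

/-- Lebesgue measure on the unit interval, as a probability measure on `ℝ` since kernels are
functions on all of `ℝ × ℝ`. -/
abbrev unitLebesgue : Measure ℝ := volume.restrict (Icc 0 1)

instance : IsProbabilityMeasure unitLebesgue :=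
  ⟨by simp⟩

lemma setIntegral_prod_eq_unitLebesgue (U : ℝ × ℝ → ℝ) {S T : Set ℝ} (hS : MeasurableSet S)
    (hT : MeasurableSet T) :
    ∫ p in S ×ˢ T, U p ∂unitLebesgue.prod unitLebesgue =
      ∫ p in (S ∩ Icc 0 1) ×ˢ (T ∩ Icc 0 1), U p := by
  rw [Measure.prod_restrict, Measure.restrict_restrict (hS.prod hT), prod_inter_prod,
    Measure.volume_eq_prod]

lemma cutNorm_nonneg (U : ℝ → ℝ → ℝ) : 0 ≤ cutNorm U :=
  Real.sSup_nonneg <| by rintro _ ⟨S, T, -, -, -, -, rfl⟩; exact abs_nonneg _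

lemma cutNorm_le_of_cutNormLE {U : ℝ → ℝ → ℝ} {c : ℝ}
    (h : CutNormLE unitLebesgue (Function.uncurry U) c) : cutNorm U ≤ c := by
  refine csSup_le ⟨_, ∅, ∅, .empty, .empty, empty_subset _, empty_subset _, rfl⟩ ?_
  rintro _ ⟨S, T, hS, hT, hS', hT', rfl⟩
  have := h S T hS hT
  rwa [setIntegral_prod_eq_unitLebesgue _ hS hT, inter_eq_left.2 hS', inter_eq_left.2 hT'] at this

lemma cutNormLE_cutNorm {U : ℝ → ℝ → ℝ}
    (hU : Integrable (Function.uncurry U) (unitLebesgue.prod unitLebesgue)) :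
    CutNormLE unitLebesgue (Function.uncurry U) (cutNorm U) := by
  intro S T hS hT
  rw [setIntegral_prod_eq_unitLebesgue _ hS hT]
  refine le_csSup ⟨∫ p, ‖Function.uncurry U p‖ ∂unitLebesgue.prod unitLebesgue, ?_⟩
    ⟨_, _, hS.inter measurableSet_Icc, hT.inter measurableSet_Icc, inter_subset_right,
      inter_subset_right, rfl⟩
  rintro _ ⟨S, T, hS, hT, hS', hT', rfl⟩
  have := cutNormLE_integral_norm hU S T hS hT
  rwa [setIntegral_prod_eq_unitLebesgue _ hS hT, inter_eq_left.2 hS', inter_eq_left.2 hT'] at this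

lemma cutNormLE_dCut {U V : ℝ → ℝ → ℝ}
    (hU : Integrable (Function.uncurry U) (unitLebesgue.prod unitLebesgue))
    (hV : Integrable (Function.uncurry V) (unitLebesgue.prod unitLebesgue)) :
    CutNormLE unitLebesgue (Function.uncurry U - Function.uncurry V) (dCut U V) :=
  cutNormLE_cutNorm (U := fun x y ↦ U x y - V x y) (hU.sub hV)

lemma dCut_le_of_cutNormLE {U V : ℝ → ℝ → ℝ} {c : ℝ}
    (h : CutNormLE unitLebesgue (Function.uncurry U - Function.uncurry V) c) : dCut U V ≤ c :=
  cutNorm_le_of_cutNormLE (U := fun x y ↦ U x y - V x y) h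

lemma dCut_le_integral_norm_sub {U V : ℝ → ℝ → ℝ}
    (hU : Integrable (Function.uncurry U) (unitLebesgue.prod unitLebesgue))
    (hV : Integrable (Function.uncurry V) (unitLebesgue.prod unitLebesgue)) :
    dCut U V ≤ ∫ p, ‖Function.uncurry U p - Function.uncurry V p‖
      ∂unitLebesgue.prod unitLebesgue :=
  dCut_le_of_cutNormLE (cutNormLE_integral_norm (hU.sub hV))

lemma dCut_le_add_of_abs_le {U V : ℝ → ℝ → ℝ} {c d : ℝ}
    (hU : Integrable (Function.uncurry U) (unitLebesgue.prod unitLebesgue))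
    (hV : Integrable (Function.uncurry V) (unitLebesgue.prod unitLebesgue))
    (hc : ∀ x y, |U x y| ≤ c) (hd : ∀ x y, |V x y| ≤ d) : dCut U V ≤ c + d :=
  calc dCut U V ≤ ∫ p, ‖Function.uncurry U p - Function.uncurry V p‖
        ∂unitLebesgue.prod unitLebesgue := dCut_le_integral_norm_sub hU hV
    _ ≤ ∫ _, c + d ∂unitLebesgue.prod unitLebesgue :=
        integral_mono (hU.sub hV).norm (integrable_const _) fun p ↦
          (norm_sub_le _ _).trans (add_le_add (hc _ _) (hd _ _))
    _ = c + d := by simp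

lemma deltaCut_nonneg (U V : ℝ → ℝ → ℝ) : 0 ≤ deltaCut U V :=
  Real.sInf_nonneg <| by rintro _ ⟨σ, τ, -, -, rfl⟩; exact cutNorm_nonneg _

lemma exists_dCut_comp_lt_of_deltaCut_lt {U V : ℝ → ℝ → ℝ} {r : ℝ} (h : deltaCut U V < r) :
    ∃ σ τ, MeasurePreserving σ unitLebesgue unitLebesgue ∧
      MeasurePreserving τ unitLebesgue unitLebesgue ∧
      dCut (fun x y ↦ U (σ x) (σ y)) (fun x y ↦ V (τ x) (τ y)) < r := by
  have hid : IsMPSelf id := ⟨.id _, mapsTo_id _⟩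
  obtain ⟨_, ⟨σ, τ, hσ, hτ, rfl⟩, hστ⟩ :=
    exists_lt_of_csInf_lt (by exact ⟨_, id, id, hid, hid, rfl⟩) h
  exact ⟨σ, τ, hσ.1, hτ.1, hστ⟩

variable {n : ℕ} [NeZero n]

/-- The index `⌈nx⌉ - 1` of the cell `(i/n, (i+1)/n]` containing `x ∈ (0, 1]`; the value for other
`x` is irrelevant. -/
def cellIndex (n : ℕ) [NeZero n] (x : ℝ) : Fin n := Fin.ofNat n (⌈n * x⌉₊ - 1)

lemma cellIndex_eq_iff_ceil {x : ℝ} (hx : x ∈ Ioc 0 1) {i : Fin n} :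
    cellIndex n x = i ↔ ⌈n * x⌉ = ((i : ℕ) : ℤ) + 1 := by
  have hn : (0 : ℝ) < n := Nat.cast_pos.2 i.pos
  have hpos : 0 < ⌈n * x⌉₊ := Nat.ceil_pos.2 (mul_pos hn hx.1)
  have hle : ⌈n * x⌉₊ ≤ n := Nat.ceil_le.2 (mul_le_of_le_one_right hn.le hx.2)
  rw [← Int.natCast_ceil_eq_ceil (mul_pos hn hx.1).le, cellIndex, Fin.ext_iff, Fin.val_ofNat,
    Nat.mod_eq_of_lt (by lia)]
  lia

lemma cellIndex_eq_iff_mem_Ioc {x : ℝ} (hx : x ∈ Ioc 0 1) {i : Fin n} :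
    cellIndex n x = i ↔ x ∈ Ioc ((i : ℝ) / n) ((i + 1) / n) := by
  have hn : (0 : ℝ) < n := Nat.cast_pos.2 i.pos
  rw [cellIndex_eq_iff_ceil hx, Int.ceil_eq_iff, mem_Ioc, div_lt_iff₀' hn, le_div_iff₀' hn]
  push_cast
  rw [add_sub_cancel_right]

omit [NeZero n] in
lemma Ioc_cell_subset (i : Fin n) : Ioc ((i : ℝ) / n) ((i + 1) / n) ⊆ Ioc 0 1 := by
  have hn : (0 : ℝ) < n := Nat.cast_pos.2 i.pos
  refine Ioc_subset_Ioc (by positivity) ((div_le_one hn).2 ?_)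
  exact_mod_cast i.isLt

lemma measurable_cellIndex : Measurable (cellIndex n) :=
  (Measurable.of_discrete (f := fun k : ℕ ↦ Fin.ofNat n (k - 1))).comp (by fun_prop)

lemma ae_mem_Ioc_unitLebesgue : ∀ᵐ x ∂unitLebesgue, x ∈ Ioc (0 : ℝ) 1 := by
  rw [unitLebesgue, ← Measure.restrict_congr_set Ioc_ae_eq_Icc]
  exact ae_restrict_mem measurableSet_Ioc

lemma ae_mem_Ioc_prod_unitLebesgue :
    ∀ᵐ p ∂unitLebesgue.prod unitLebesgue, p.1 ∈ Ioc (0 : ℝ) 1 ∧ p.2 ∈ Ioc (0 : ℝ) 1 :=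
  (Measure.quasiMeasurePreserving_fst.ae ae_mem_Ioc_unitLebesgue).and
    (Measure.quasiMeasurePreserving_snd.ae ae_mem_Ioc_unitLebesgue)

lemma measurePreserving_cellIndex :
    MeasurePreserving (cellIndex n) unitLebesgue (uniformOn univ) := by
  refine ⟨measurable_cellIndex, Measure.ext_of_singleton fun i ↦ ?_⟩
  have hpre : cellIndex n ⁻¹' {i} =ᵐ[unitLebesgue] Ioc ((i : ℝ) / n) ((i + 1) / n) := by
    filter_upwards [ae_mem_Ioc_unitLebesgue] with x hx
    exact propext (cellIndex_eq_iff_mem_Ioc hx)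
  rw [Measure.map_apply measurable_cellIndex (.singleton i), measure_congr hpre,
    Measure.restrict_apply measurableSet_Ioc,
    inter_eq_left.2 ((Ioc_cell_subset i).trans Ioc_subset_Icc_self), Real.volume_Ioc,
    uniformOn_univ, Measure.count_singleton, Fintype.card_fin, ← sub_div,
    add_sub_cancel_left, ENNReal.ofReal_div_of_pos (Nat.cast_pos.2 i.pos),
    ENNReal.ofReal_one, ENNReal.ofReal_natCast]

lemma graphonOfGraph_eq_adjMatrix (G : SimpleGraph (Fin n)) [DecidableRel G.Adj] {x y : ℝ}
    (hx : x ∈ Ioc 0 1) (hy : y ∈ Ioc 0 1) :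
    graphonOfGraph G x y = G.adjMatrix ℝ (cellIndex n x) (cellIndex n y) := by
  simp only [graphonOfGraph, ← cellIndex_eq_iff_ceil hx, ← cellIndex_eq_iff_ceil hy,
    SimpleGraph.adjMatrix_apply, ↓existsAndEq, and_true]

omit [NeZero n] in
lemma abs_graphonOfGraph_le_one (G : SimpleGraph (Fin n)) (x y : ℝ) :
    |graphonOfGraph G x y| ≤ 1 := by
  rw [graphonOfGraph]
  split_ifs <;> simp

/-- The average of `W` over the cell `(i/n, (i+1)/n] × (j/n, (j+1)/n]`, i.e. the value of `W̄_n`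
there. -/
def cellAverage (n : ℕ) (W : ℝ → ℝ → ℝ) (i j : Fin n) : ℝ :=
  ⨍ p in Ioc ((i : ℝ) / n) ((i + 1) / n) ×ˢ Ioc ((j : ℝ) / n) ((j + 1) / n), W p.1 p.2

lemma barStep_eq_cellAverage (W : ℝ → ℝ → ℝ) {x y : ℝ} (hx : x ∈ Ioc 0 1) (hy : y ∈ Ioc 0 1) :
    barStep n W x y = cellAverage n W (cellIndex n x) (cellIndex n y) := by
  simp only [barStep, condExpPart, ← cellIndex_eq_iff_mem_Ioc hx, ← cellIndex_eq_iff_mem_Ioc hy,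
    ite_and]
  simp [cellAverage]

omit [NeZero n] in
lemma abs_cellAverage_le {W : ℝ → ℝ → ℝ} {c : ℝ} (hc : 0 ≤ c) (hW : ∀ x y, |W x y| ≤ c)
    (i j : Fin n) : |cellAverage n W i j| ≤ c := by
  rw [cellAverage, setAverage_eq, smul_eq_mul, abs_mul, abs_of_nonneg (by positivity)]
  set C := Ioc ((i : ℝ) / n) ((i + 1) / n) ×ˢ Ioc ((j : ℝ) / n) ((j + 1) / n)
  have hC : volume C < ⊤ :=
    ((Metric.isBounded_Ioc _ _).prod (Metric.isBounded_Ioc _ _)).measure_lt_top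
  calc (volume.real C)⁻¹ * |∫ p in C, W p.1 p.2| ≤ (volume.real C)⁻¹ * (c * volume.real C) := by
        gcongr
        exact norm_setIntegral_le_of_norm_le_const (f := fun p ↦ W p.1 p.2) hC fun p _ ↦ hW _ _
    _ = c * ((volume.real C)⁻¹ * volume.real C) := by ring
    _ ≤ c := mul_le_of_le_one_right hc inv_mul_le_one

lemma graphonOfGraph_ae_eq (G : SimpleGraph (Fin n)) [DecidableRel G.Adj] :
    Function.uncurry (graphonOfGraph G) =ᵐ[unitLebesgue.prod unitLebesgue]
      Function.uncurry (G.adjMatrix ℝ) ∘ Prod.map (cellIndex n) (cellIndex n) := by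
  filter_upwards [ae_mem_Ioc_prod_unitLebesgue] with p hp
  exact graphonOfGraph_eq_adjMatrix G hp.1 hp.2

lemma barStep_ae_eq (W : ℝ → ℝ → ℝ) :
    Function.uncurry (barStep n W) =ᵐ[unitLebesgue.prod unitLebesgue]
      Function.uncurry (cellAverage n W) ∘ Prod.map (cellIndex n) (cellIndex n) := by
  filter_upwards [ae_mem_Ioc_prod_unitLebesgue] with p hp
  exact barStep_eq_cellAverage W hp.1 hp.2

lemma integrable_of_ae_eq_comp_cellIndex {U : ℝ × ℝ → ℝ} {M : Fin n × Fin n → ℝ}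
    (h : U =ᵐ[unitLebesgue.prod unitLebesgue] M ∘ Prod.map (cellIndex n) (cellIndex n)) :
    Integrable U (unitLebesgue.prod unitLebesgue) :=
  ((measurePreserving_cellIndex.prod measurePreserving_cellIndex).integrable_comp_of_integrable
    .of_finite).congr h.symm

lemma integrable_graphonOfGraph (G : SimpleGraph (Fin n)) :
    Integrable (Function.uncurry (graphonOfGraph G)) (unitLebesgue.prod unitLebesgue) := by
  classical exact integrable_of_ae_eq_comp_cellIndex (graphonOfGraph_ae_eq G)

lemma integrable_barStep (W : ℝ → ℝ → ℝ) :
    Integrable (Function.uncurry (barStep n W)) (unitLebesgue.prod unitLebesgue) :=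
  integrable_of_ae_eq_comp_cellIndex (barStep_ae_eq W)

lemma integrable_uncurry_of_abs_le {W : ℝ → ℝ → ℝ} {c : ℝ}
    (hWm : Measurable (Function.uncurry W)) (hW : ∀ x y, |W x y| ≤ c) :
    Integrable (Function.uncurry W) (unitLebesgue.prod unitLebesgue) :=
  .of_bound hWm.aestronglyMeasurable c (ae_of_all _ fun p ↦ hW p.1 p.2)

end UnitInterval

section Relabelling

variable {n : ℕ} [NeZero n] {W : ℝ → ℝ → ℝ}

lemma exists_perm_dCut_comap_le (hWm : Measurable (Function.uncurry W)) (hW : ∀ x y, |W x y| ≤ 1)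
    (G : SimpleGraph (Fin n)) {σ τ : ℝ → ℝ} (hσ : MeasurePreserving σ unitLebesgue unitLebesgue)
    (hτ : MeasurePreserving τ unitLebesgue unitLebesgue) {m : ℕ} (hm : 0 < m)
    (hcard : 2 ^ (8 * m) ≤ n) :
    ∃ π : Equiv.Perm (Fin n), dCut (graphonOfGraph (G.comap π)) W ≤
      dCut (fun x y ↦ graphonOfGraph G (σ x) (σ y)) (fun x y ↦ W (τ x) (τ y)) + 5 / √m +
        2 * dCut (barStep n W) W := by
  classical
  have hA (p) : |Function.uncurry (G.adjMatrix ℝ) p| ≤ 1 := by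
    simp only [Function.uncurry, SimpleGraph.adjMatrix_apply]
    split_ifs <;> simp
  have hB (p) : |Function.uncurry (cellAverage n W) p| ≤ 1 :=
    abs_cellAverage_le zero_le_one hW _ _
  have hWi := integrable_uncurry_of_abs_le hWm hW
  have hG := (hσ.prod hσ).integrable_comp_of_integrable (integrable_graphonOfGraph G)
  have hWτ := (hτ.prod hτ).integrable_comp_of_integrable hWi
  have hbarτ := (hτ.prod hτ).integrable_comp_of_integrable (integrable_barStep (n := n) W)
  have hbar := cutNormLE_dCut (integrable_barStep (n := n) W) hWi
  have hGW := cutNormLE_dCut (U := fun x y ↦ graphonOfGraph G (σ x) (σ y))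
    (V := fun x y ↦ W (τ x) (τ y)) hG hWτ
  have hWbar := hbar.sub_comm.comp_measurePreserving hτ (hWi.sub (integrable_barStep W))
  have hAB : CutNormLE unitLebesgue
      (Function.uncurry (G.adjMatrix ℝ) ∘ Prod.map (cellIndex n ∘ σ) (cellIndex n ∘ σ) -
        Function.uncurry (cellAverage n W) ∘ Prod.map (cellIndex n ∘ τ) (cellIndex n ∘ τ)) _ :=
    (hGW.triangle hG hWτ hbarτ hWbar).congr_ae <|
    ((hσ.prod hσ).quasiMeasurePreserving.ae_eq_comp (graphonOfGraph_ae_eq G)).sub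
      ((hτ.prod hτ).quasiMeasurePreserving.ae_eq_comp (barStep_ae_eq W))
  obtain ⟨π, hπ⟩ := exists_perm_cutNormLE_of_measurePreserving (measurePreserving_cellIndex.comp hσ)
    (measurePreserving_cellIndex.comp hτ) hA hB hAB hm (by simpa using hcard)
  have hGbar := (hπ.comp_measurePreserving measurePreserving_cellIndex .of_finite).congr_ae <|
    ((graphonOfGraph_ae_eq (G.comap π)).sub (barStep_ae_eq W)).symm
  refine ⟨π, (dCut_le_of_cutNormLE (hGbar.triangle (integrable_graphonOfGraph _)
    (integrable_barStep W) hWi hbar)).trans_eq (by ring)⟩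

omit [NeZero n] in
lemma exists_two_pow_le_and_five_div_sqrt_le (hn : 81 ≤ Real.logb 2 n) :
    ∃ m : ℕ, 0 < m ∧ 2 ^ (8 * m) ≤ n ∧ 5 / √m ≤ 17 / √(Real.logb 2 n) := by
  set l := Real.logb 2 n with hl
  have hn0 : (0 : ℝ) < n := by
    rcases n.eq_zero_or_pos with rfl | h
    · norm_num [l] at hn
    · exact_mod_cast h
  have hml : (⌊l / 8⌋₊ : ℝ) ≤ l / 8 := Nat.floor_le (by positivity)
  have hlm : l / 8 < ⌊l / 8⌋₊ + 1 := Nat.lt_floor_add_one _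
  have hm : (0 : ℝ) < ⌊l / 8⌋₊ := by linarith
  refine ⟨⌊l / 8⌋₊, by exact_mod_cast hm, ?_, ?_⟩
  · have : (2 : ℝ) ^ ((8 * ⌊l / 8⌋₊ : ℕ) : ℝ) ≤ n :=
      (Real.le_logb_iff_rpow_le one_lt_two hn0).1 (by push_cast; linarith)
    exact_mod_cast this
  · rw [div_le_div_iff₀ (by positivity) (by positivity)]
    refine abs_le_of_sq_le_sq' ?_ (by positivity) |>.2
    rw [mul_pow, mul_pow, Real.sq_sqrt (by linarith), Real.sq_sqrt hm.le]
    linarith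

lemma exists_perm_dCut_comap_le_of_deltaCut_le (hWm : Measurable (Function.uncurry W))
    (hW : ∀ x y, |W x y| ≤ 1) (hn : 2 ≤ n) {G : SimpleGraph (Fin n)} {δ : ℝ}
    (hG : deltaCut (graphonOfGraph G) W ≤ δ) :
    ∃ π : Equiv.Perm (Fin n), dCut (graphonOfGraph (G.comap π)) W ≤
      δ + (18 / √(Real.logb 2 n) + 2 * dCut (barStep n W) W) := by
  set l := Real.logb 2 n
  have hl : 0 < √l := Real.sqrt_pos.2 (Real.logb_pos one_lt_two (by exact_mod_cast hn))
  have hbar : 0 ≤ dCut (barStep n W) W := cutNorm_nonneg _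
  rcases lt_or_ge l 81 with hl81 | hl81
  · have hδ : 0 ≤ δ := (deltaCut_nonneg _ _).trans hG
    have h1 : dCut (graphonOfGraph (G.comap (1 : Equiv.Perm (Fin n)))) W ≤ 1 + 1 :=
      dCut_le_add_of_abs_le (integrable_graphonOfGraph _) (integrable_uncurry_of_abs_le hWm hW)
        (abs_graphonOfGraph_le_one _) hW
    have h2 : √l ≤ 9 := Real.sqrt_le_iff.2 ⟨by norm_num, by linarith⟩
    have h3 : 2 ≤ 18 / √l := (le_div_iff₀ hl).2 (by linarith)
    exact ⟨1, by linarith⟩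
  · obtain ⟨m, hm, hmn, hml⟩ := exists_two_pow_le_and_five_div_sqrt_le hl81
    obtain ⟨σ, τ, hσ, hτ, hστ⟩ := exists_dCut_comp_lt_of_deltaCut_lt
      (hG.trans_lt (lt_add_of_pos_right δ (one_div_pos.2 hl)))
    obtain ⟨π, hπ⟩ := exists_perm_dCut_comap_le hWm hW G hσ hτ hm hmn
    have : 18 / √l = 17 / √l + 1 / √l := by ring
    exact ⟨π, by linarith⟩

lemma card_le_factorial_mul_card_of_forall_exists_comap {V : Type*} [Finite V]
    {p q : SimpleGraph V → Prop} (h : ∀ G, p G → ∃ π : Equiv.Perm V, q (G.comap π)) :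
    Nat.card {G // p G} ≤ (Nat.card V).factorial * Nat.card {G // q G} := by
  choose π hπ using fun G : {G // p G} ↦ h G G.2
  rw [← Nat.card_perm, ← Nat.card_prod]
  refine Nat.card_le_card_of_injective (fun G ↦ (π G, ⟨G.1.comap (π G), hπ G⟩)) fun G H hGH ↦ ?_
  obtain ⟨hperm, hcomap⟩ : π G = π H ∧ G.1.comap (π G) = H.1.comap (π H) := by
    simpa only [Prod.mk.injEq, Subtype.mk.injEq] using hGH
  rw [hperm] at hcomap
  exact Subtype.ext ((π H).symm.simpleGraph.injective hcomap)

end Relabelling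

section StepApproximation

open Topology

lemma closedBall_cell_center {n : ℕ} (i : Fin n) :
    Metric.closedBall (((i : ℝ) + 1 / 2) / n) (1 / (2 * n)) = Icc ((i : ℝ) / n) ((i + 1) / n) := by
  have hn : (0 : ℝ) < n := Nat.cast_pos.2 i.pos
  rw [Real.closedBall_eq_Icc]
  congr 1 <;> field

lemma cellAverage_eq_setAverage_closedBall {n : ℕ} (W : ℝ → ℝ → ℝ) (i j : Fin n) :
    cellAverage n W i j = ⨍ p in Metric.closedBall
      (((i : ℝ) + 1 / 2) / n, ((j : ℝ) + 1 / 2) / n) (1 / (2 * n)), W p.1 p.2 := by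
  rw [cellAverage, ← closedBall_prod_same, closedBall_cell_center, closedBall_cell_center]
  refine setAverage_congr ?_
  rw [Measure.volume_eq_prod]
  exact Measure.set_prod_ae_eq Ioc_ae_eq_Icc Ioc_ae_eq_Icc

lemma mem_closedBall_cellIndex {n : ℕ} [NeZero n] {x : ℝ} (hx : x ∈ Ioc 0 1) :
    x ∈ Metric.closedBall (((cellIndex n x : ℝ) + 1 / 2) / n) (1 / (2 * n)) := by
  rw [closedBall_cell_center]
  exact Ioc_subset_Icc_self ((cellIndex_eq_iff_mem_Ioc hx).1 rfl)

lemma ae_tendsto_barStep {W : ℝ → ℝ → ℝ} (hW : LocallyIntegrable (Function.uncurry W)) :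
    ∀ᵐ p ∂unitLebesgue.prod unitLebesgue,
      Tendsto (fun n : ℕ ↦ barStep (n + 1) W p.1 p.2) atTop (𝓝 (W p.1 p.2)) := by
  have hac : unitLebesgue.prod unitLebesgue ≪ (volume : Measure (ℝ × ℝ)) := by
    rw [Measure.prod_restrict, Measure.volume_eq_prod]
    exact Measure.absolutelyContinuous_of_le Measure.restrict_le_self
  have hradius : Tendsto (fun n : ℕ ↦ 1 / (2 * ((n + 1 : ℕ) : ℝ))) atTop (𝓝[>] 0) := by
    refine tendsto_nhdsWithin_iff.2 ⟨Tendsto.const_div_atTop ?_ 1, .of_forall fun n ↦ ?_⟩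
    · exact ((tendsto_natCast_atTop_atTop.comp (tendsto_add_atTop_nat 1)).const_mul_atTop two_pos)
    · exact mem_Ioi.2 (by positivity)
  filter_upwards [hac.ae_le (IsUnifLocDoublingMeasure.ae_tendsto_average volume hW 1),
    ae_mem_Ioc_prod_unitLebesgue] with p hp hp01
  let center (n : ℕ) (x : ℝ) : ℝ := ((cellIndex (n + 1) x : ℝ) + 1 / 2) / (n + 1 : ℕ)
  refine (hp (fun n ↦ (center n p.1, center n p.2)) _ hradius (.of_forall fun n ↦ ?_)).congr
    fun n ↦ ?_
  · rw [one_mul, ← closedBall_prod_same]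
    exact ⟨mem_closedBall_cellIndex hp01.1, mem_closedBall_cellIndex hp01.2⟩
  · rw [barStep_eq_cellAverage W hp01.1 hp01.2, cellAverage_eq_setAverage_closedBall]
    rfl

lemma tendsto_dCut_barStep {W : ℝ → ℝ → ℝ} {c : ℝ} (hWm : Measurable (Function.uncurry W))
    (hW : ∀ x y, |W x y| ≤ c) : Tendsto (fun n ↦ dCut (barStep n W) W) atTop (𝓝 0) := by
  have hc : 0 ≤ c := (abs_nonneg _).trans (hW 0 0)
  have hWi := integrable_uncurry_of_abs_le hWm hW
  have hloc : LocallyIntegrable (Function.uncurry W) :=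
    (locallyIntegrable_const c).mono hWm.aestronglyMeasurable <|
      ae_of_all _ fun p ↦ (hW p.1 p.2).trans (le_abs_self c)
  have hlim : Tendsto (fun n : ℕ ↦ ∫ p, ‖Function.uncurry (barStep (n + 1) W) p -
      Function.uncurry W p‖ ∂unitLebesgue.prod unitLebesgue) atTop
      (𝓝 (∫ _, 0 ∂unitLebesgue.prod unitLebesgue)) := by
    refine tendsto_integral_of_dominated_convergence (fun _ ↦ c + c)
      (fun n ↦ ((integrable_barStep W).sub hWi).norm.aestronglyMeasurable) (integrable_const _)
      (fun n ↦ ?_) ?_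
    · filter_upwards [barStep_ae_eq (n := n + 1) W] with p hp
      rw [norm_norm, hp]
      exact (norm_sub_le _ _).trans (add_le_add (abs_cellAverage_le hc hW _ _) (hW _ _))
    · exact (ae_tendsto_barStep hloc).mono fun p hp ↦ tendsto_iff_norm_sub_tendsto_zero.1 hp
  rw [integral_zero] at hlim
  rw [← tendsto_add_atTop_iff_nat 1]
  exact squeeze_zero (fun _ ↦ cutNorm_nonneg _)
    (fun n ↦ dCut_le_integral_norm_sub (integrable_barStep W) hWi) hlim

end StepApproximation

theorem stmt4_general (W : ℝ → ℝ → ℝ) (hWm : Measurable (Function.uncurry W))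
    (hW : ∀ x y, |W x y| ≤ 1) :
    (∀ n : ℕ, 2 ≤ n → ∀ δ : ℝ,
      (NCut n δ W : ℝ) ≤ (Nat.factorial n : ℝ) *
        (NhatCut n (δ + (18 / Real.sqrt (Real.logb 2 (n : ℝ)) +
          2 * dCut (barStep n W) W)) W : ℝ)) ∧
    Filter.Tendsto
      (fun n : ℕ => 18 / Real.sqrt (Real.logb 2 (n : ℝ)) + 2 * dCut (barStep n W) W)
      Filter.atTop (nhds 0) := by
  refine ⟨fun n hn δ ↦ ?_, ?_⟩
  · have : NeZero n := ⟨by lia⟩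
    have hcard : NCut n δ W ≤ (Nat.card (Fin n)).factorial * NhatCut n _ W :=
      card_le_factorial_mul_card_of_forall_exists_comap fun G ↦
        exists_perm_dCut_comap_le_of_deltaCut_le hWm hW hn
    rw [Nat.card_fin] at hcard
    exact_mod_cast hcard
  · have hlog : Tendsto (fun n : ℕ ↦ √(Real.logb 2 n)) atTop atTop :=
      Real.tendsto_sqrt_atTop.comp
        ((Real.tendsto_logb_atTop one_lt_two).comp tendsto_natCast_atTop_atTop)
    simpa only [mul_zero, add_zero] using
      (hlog.const_div_atTop 18).add ((tendsto_dCut_barStep hWm hW).const_mul 2)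

/-- Lemma 4.2: `N_□(n,δ;W) ≤ n! N̂_□(n, δ+ε_n; W)` where
`ε_n = 18/√(log₂ n) + 2 d_□(W̄_n, W) → 0`. -/
theorem stmt4 (W : ℝ → ℝ → ℝ) (hW : IsGraphon W) :
    (∀ n : ℕ, 2 ≤ n → ∀ δ : ℝ, 0 < δ →
      (NCut n δ W : ℝ) ≤ (Nat.factorial n : ℝ) *
        (NhatCut n (δ + (18 / Real.sqrt (Real.logb 2 (n : ℝ)) +
          2 * dCut (barStep n W) W)) W : ℝ)) ∧
    Filter.Tendsto
      (fun n : ℕ => 18 / Real.sqrt (Real.logb 2 (n : ℝ)) + 2 * dCut (barStep n W) W)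
      Filter.atTop (nhds 0) := by
  obtain ⟨hcard, hlim⟩ := stmt4_general W hW.2.1 fun x y ↦ by
    rw [abs_of_nonneg (hW.2.2 x y).1]; exact (hW.2.2 x y).2
  exact ⟨fun n hn δ _ ↦ hcard n hn δ, hlim⟩

end
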